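/- Let occ(σ) be the number of occurrences in σ of the mesh pattern Nr. 17, where an occurrence is a pair of indices i < j with σ_i < σ_j such that: i = 1, σ_1 = 1, every element strictly between positions 1 and j has value less than σ_j, and every element after position j has value greater than σ_j. Let E(t,u) = Σ_{n≥0} t^n Σ_{σ∈K_n} u^{occ(σ)} and set D = 1 + t(1+u+ut) + t(1−u)·A(t). Then (1+t)·D·E(t,u) = (D + t(1+t)^2)·A(t) as formal power series in t over ℚ[u]. -/

import Mathlib

/-- A permutation of `{0, …, n-1}` is a *king permutation* if consecutive entries
differ by more than 1 in absolute value. -/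
def IsKing {n : ℕ} (σ : Equiv.Perm (Fin n)) : Prop :=
  ∀ i : Fin n, ∀ h : (i : ℕ) + 1 < n,
    1 < |((σ ⟨(i : ℕ) + 1, h⟩ : ℕ) : ℤ) - ((σ i : ℕ) : ℤ)|

/-- `kingCount n = A_n`, the number of king permutations of length `n`. -/
noncomputable def kingCount (n : ℕ) : ℕ :=
  Nat.card {σ : Equiv.Perm (Fin n) // IsKing σ}

/-- `A(t)` regarded as a power series over `ℚ[u]` (constant-polynomial coefficients). -/
noncomputable def kingAu : PowerSeries (Polynomial ℚ) :=
  PowerSeries.mk fun n => (kingCount n : Polynomial ℚ)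

/-- `u` viewed as a constant power series over `ℚ[u]`. -/
noncomputable def U : PowerSeries (Polynomial ℚ) :=
  PowerSeries.C (R := Polynomial ℚ) Polynomial.X

/-- `t`, the power series variable. -/
noncomputable def T : PowerSeries (Polynomial ℚ) :=
  PowerSeries.X

/-- An occurrence of the mesh pattern Nr. 17 in `σ`. -/
def OccP {n : ℕ} (σ : Equiv.Perm (Fin n)) (i j : Fin n) : Prop :=
  i < j ∧ σ i < σ j ∧
    (∀ k : Fin n, ¬ k < i) ∧ (σ i : ℕ) = 0 ∧
    (∀ k : Fin n, i < k → k < j → σ k < σ j) ∧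
    (∀ k : Fin n, j < k → σ j < σ k)

/-- The number of occurrences of the mesh pattern Nr. 17 in `σ`. -/
noncomputable def occP {n : ℕ} (σ : Equiv.Perm (Fin n)) : ℕ :=
  Nat.card {p : Fin n × Fin n // OccP σ p.1 p.2}

-- `E(t,u) = Σ_{n≥0} t^n Σ_{σ∈K_n} u^{occ(σ)}`, a power series in `t` over `ℚ[u]`.
open Classical in
noncomputable def Etu : PowerSeries (Polynomial ℚ) :=
  PowerSeries.mk fun n =>
    ∑ σ : Equiv.Perm (Fin n),
      if IsKing σ then (Polynomial.X : Polynomial ℚ) ^ occP σ else 0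

/-!
Call a position of a permutation a strong fixed point if its entry is larger than everything
before it and smaller than everything after it. An occurrence of the mesh pattern is a pair `i < j`
of strong fixed points with `i` the first position. So `occ σ = 0` unless `σ` starts with its
smallest entry, and then `occ σ` is the number of strong fixed points after the first position.

A strong fixed point splits `σ` as a direct sum `τ ⊕ ρ` in which `ρ` starts with its smallest entry,
and `τ ⊕ ρ` is king if and only if `τ` and `ρ` are king and it is not the case that `τ` ends with
its largest and `ρ` starts with its smallest entry. Let `B` count the king permutations that start
with their smallest entry, and `Q` those among them that do not also end with their largest one.
Removing the first entry gives `B = t (A - B)`; removing the last one gives `B - Q = t (1 + Q)`.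

Let `F` be the series `B` with weight `u ^ occ σ`. Writing `u ^ k` as `1 + (u - 1) ∑ i < k, u ^ i`,
with one summand for each strong fixed point after the first position, and splitting `σ` at that
point gives `F = B + (u - 1) Q F`. Now eliminate `B`, `Q` and `F` from `E = A - B + F`.
-/

open Finset PowerSeries

-- As `p` runs over `S`, the exponents on the right are `0, …, #S - 1`: this is a geometric sum.
theorem pow_card_eq_one_add_mul_sum {R α : Type*} [Ring R] [LinearOrder α] (u : R)
    (S : Finset α) :
    u ^ #S = 1 + (u - 1) * ∑ p ∈ S, u ^ #{q ∈ S | p < q} := by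
  induction S using Finset.induction_on_min with
  | empty => simp
  | insert a S ha ih =>
    have haS : a ∉ S := fun h => (ha a h).false
    have hfilter_min : {q ∈ insert a S | a < q} = S := by
      rw [filter_insert, if_neg (lt_irrefl a), filter_true_of_mem ha]
    have hfilter : ∀ p ∈ S, {q ∈ insert a S | p < q} = {q ∈ S | p < q} := fun p hp => by
      rw [filter_insert, if_neg (ha p hp).asymm]
    have hsum : ∑ p ∈ S, u ^ #{q ∈ insert a S | p < q} = ∑ p ∈ S, u ^ #{q ∈ S | p < q} :=
      sum_congr rfl fun p hp => by rw [hfilter p hp]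
    rw [card_insert_of_notMem haS, sum_insert haS, hfilter_min, hsum,
      mul_add, add_left_comm, ← ih, sub_mul, one_mul, sub_add_cancel, pow_succ']

section Cuts

variable {n : ℕ}

/-- A cut of `σ`: the first `m` positions carry the `m` smallest values, so that `σ` is a direct
sum of a permutation of length `m` and another one. -/
def IsCut (σ : Equiv.Perm (Fin n)) (m : ℕ) : Prop :=
  ∀ i, (σ i : ℕ) < m ↔ (i : ℕ) < m

/-- A strong fixed point of `σ`: a position whose entry exceeds all entries before it and is
exceeded by all entries after it. Equivalently, `σ` has a cut on either side of it, and this form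
makes sense for a natural number `p` and behaves well under direct sums. -/
def IsStrongFixedPoint (σ : Equiv.Perm (Fin n)) (p : ℕ) : Prop :=
  p < n ∧ IsCut σ p ∧ IsCut σ (p + 1)

theorem isCut_zero (σ : Equiv.Perm (Fin n)) : IsCut σ 0 := fun i => by simp

theorem isCut_self (σ : Equiv.Perm (Fin n)) : IsCut σ n := fun i => by simp

theorem isCut_succ_iff_of_apply_eq {σ : Equiv.Perm (Fin n)} {j : Fin n} (hj : σ j = j) :
    IsCut σ (j + 1) ↔ IsCut σ j := by
  have hσ : ∀ i, (σ i : ℕ) = j ↔ (i : ℕ) = j := fun i => by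
    rw [← Fin.ext_iff, ← Fin.ext_iff, ← σ.injective.eq_iff (a := i), hj]
  refine forall_congr' fun i => ?_
  have := hσ i
  omega

theorem IsStrongFixedPoint.apply_eq {σ : Equiv.Perm (Fin n)} {j : Fin n}
    (h : IsStrongFixedPoint σ j) : σ j = j := by
  have h₁ := h.2.1 j
  have h₂ := h.2.2 j
  exact Fin.ext (by omega)

theorem isStrongFixedPoint_iff_apply_eq_and_isCut {σ : Equiv.Perm (Fin n)} {j : Fin n} :
    IsStrongFixedPoint σ j ↔ σ j = j ∧ IsCut σ j :=
  ⟨fun h => ⟨h.apply_eq, h.2.1⟩, fun h => ⟨j.2, h.2, (isCut_succ_iff_of_apply_eq h.1).2 h.2⟩⟩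

theorem isStrongFixedPoint_iff_apply_eq_of_val_eq_zero {σ : Equiv.Perm (Fin n)} {j : Fin n}
    (hj : (j : ℕ) = 0) : IsStrongFixedPoint σ j ↔ σ j = j := by
  rw [isStrongFixedPoint_iff_apply_eq_and_isCut, hj]
  exact and_iff_left (isCut_zero σ)

theorem isStrongFixedPoint_iff_apply_eq_of_val_add_one_eq {σ : Equiv.Perm (Fin n)} {j : Fin n}
    (hj : (j : ℕ) + 1 = n) : IsStrongFixedPoint σ j ↔ σ j = j := by
  refine ⟨IsStrongFixedPoint.apply_eq, fun h => ?_⟩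
  rw [isStrongFixedPoint_iff_apply_eq_and_isCut, ← isCut_succ_iff_of_apply_eq h, hj]
  exact ⟨h, isCut_self σ⟩

theorem isStrongFixedPoint_zero_of_length_one (σ : Equiv.Perm (Fin 1)) :
    IsStrongFixedPoint σ 0 :=
  ⟨Nat.one_pos, isCut_zero σ, isCut_self σ⟩

theorem apply_eq_of_forall_lt {σ : Equiv.Perm (Fin n)} {j : Fin n}
    (hlt : ∀ k < j, σ k < σ j) (hgt : ∀ k, j < k → σ j < σ k) : σ j = j := by
  have hiff : ∀ k, σ k < σ j ↔ k < j := fun k =>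
    ⟨fun hk => by
      rcases lt_trichotomy k j with h | rfl | h
      · exact h
      · exact absurd hk (lt_irrefl _)
      · exact absurd hk (hgt k h).asymm, hlt k⟩
  have hmap : (Iio j).map σ.toEmbedding = Iio (σ j) := by
    ext x
    rw [mem_map_equiv, mem_Iio, mem_Iio, ← hiff, σ.apply_symm_apply]
  have hcard := congrArg card hmap
  rw [card_map, Fin.card_Iio, Fin.card_Iio] at hcard
  exact Fin.ext hcard.symm

theorem isStrongFixedPoint_iff_forall_lt {σ : Equiv.Perm (Fin n)} {j : Fin n} :
    IsStrongFixedPoint σ j ↔ (∀ k < j, σ k < σ j) ∧ ∀ k, j < k → σ j < σ k := by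
  constructor
  · intro h
    rw [h.apply_eq]
    refine ⟨fun k hk => (h.2.1 k).2 hk, fun k hk => ?_⟩
    have := h.2.2 k
    rw [Fin.lt_def] at hk ⊢
    omega
  · rintro ⟨hlt, hgt⟩
    have hj := apply_eq_of_forall_lt hlt hgt
    rw [hj] at hlt hgt
    refine isStrongFixedPoint_iff_apply_eq_and_isCut.2 ⟨hj, fun k => ⟨fun hk => ?_, hlt k⟩⟩
    rcases lt_trichotomy k j with h | rfl | h
    · exact h
    · exact absurd (hj ▸ hk) (lt_irrefl _)
    · exact absurd hk (hgt k h).asymm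

end Cuts

section DirectSum

variable {m r : ℕ}

/-- The direct sum `τ ⊕ ρ`: first the word of `τ`, then the word of `ρ` raised by the length
of `τ`. -/
def permDirectSum (τ : Equiv.Perm (Fin m)) (ρ : Equiv.Perm (Fin r)) :
    Equiv.Perm (Fin (m + r)) :=
  finSumFinEquiv.permCongr (Equiv.Perm.sumCongr τ ρ)

theorem permDirectSum_castAdd (τ : Equiv.Perm (Fin m)) (ρ : Equiv.Perm (Fin r)) (i : Fin m) :
    permDirectSum τ ρ (Fin.castAdd r i) = Fin.castAdd r (τ i) := by
  simp [permDirectSum]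

theorem permDirectSum_natAdd (τ : Equiv.Perm (Fin m)) (ρ : Equiv.Perm (Fin r)) (i : Fin r) :
    permDirectSum τ ρ (Fin.natAdd m i) = Fin.natAdd m (ρ i) := by
  simp [permDirectSum]

theorem permDirectSum_injective :
    Function.Injective
      fun x : Equiv.Perm (Fin m) × Equiv.Perm (Fin r) => permDirectSum x.1 x.2 :=
  fun _ _ h => Equiv.Perm.sumCongrHom_injective (finSumFinEquiv.permCongr.injective h)

theorem exists_permDirectSum_eq {σ : Equiv.Perm (Fin (m + r))} (h : IsCut σ m) :
    ∃ τ ρ, permDirectSum (m := m) (r := r) τ ρ = σ := by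
  obtain ⟨⟨τ, ρ⟩, hτρ⟩ : finSumFinEquiv.symm.permCongr σ ∈
      (Equiv.Perm.sumCongrHom (Fin m) (Fin r)).range := by
    apply Equiv.Perm.mem_sumCongrHom_range_of_perm_mapsTo_inl
    rintro _ ⟨i, rfl⟩
    have hi : (σ (Fin.castAdd r i) : ℕ) < m := (h _).2 i.2
    refine ⟨⟨_, hi⟩, ?_⟩
    rw [Equiv.permCongr_apply, ← Equiv.symm_apply_eq]
    rfl
  refine ⟨τ, ρ, ?_⟩
  change finSumFinEquiv.permCongr (Equiv.Perm.sumCongrHom (Fin m) (Fin r) (τ, ρ)) = σ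
  rw [hτρ]
  exact finSumFinEquiv.permCongr.apply_symm_apply σ

theorem sum_eq_sum_permDirectSum {M : Type*} [AddCommMonoid M]
    {S : Finset (Equiv.Perm (Fin (m + r)))} {S₁ : Finset (Equiv.Perm (Fin m))}
    {S₂ : Finset (Equiv.Perm (Fin r))} (hcut : ∀ σ ∈ S, IsCut σ m)
    (hmem : ∀ τ ρ, permDirectSum τ ρ ∈ S ↔ τ ∈ S₁ ∧ ρ ∈ S₂)
    (f : Equiv.Perm (Fin (m + r)) → M) :
    ∑ σ ∈ S, f σ = ∑ τ ∈ S₁, ∑ ρ ∈ S₂, f (permDirectSum τ ρ) := by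
  rw [← sum_product' S₁ S₂ fun τ ρ => f (permDirectSum τ ρ)]
  symm
  refine sum_nbij (fun x => permDirectSum x.1 x.2) (fun x hx => ?_)
    permDirectSum_injective.injOn (fun σ hσ => ?_) fun _ _ => rfl
  · exact (hmem _ _).2 (mem_product.1 hx)
  · obtain ⟨τ, ρ, rfl⟩ := exists_permDirectSum_eq (hcut σ hσ)
    exact ⟨(τ, ρ), mem_product.2 ((hmem τ ρ).1 hσ), rfl⟩

theorem card_eq_card_mul_card_of_permDirectSum
    {S : Finset (Equiv.Perm (Fin (m + r)))} {S₁ : Finset (Equiv.Perm (Fin m))}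
    {S₂ : Finset (Equiv.Perm (Fin r))} (hcut : ∀ σ ∈ S, IsCut σ m)
    (hmem : ∀ τ ρ, permDirectSum τ ρ ∈ S ↔ τ ∈ S₁ ∧ ρ ∈ S₂) : #S = #S₁ * #S₂ := by
  simp only [card_eq_sum_ones, sum_eq_sum_permDirectSum hcut hmem, sum_mul_sum, mul_one]

theorem isCut_permDirectSum_add {τ : Equiv.Perm (Fin m)} {ρ : Equiv.Perm (Fin r)} {q : ℕ} :
    IsCut (permDirectSum τ ρ) (m + q) ↔ IsCut ρ q := by
  simp only [IsCut, Fin.forall_fin_add, permDirectSum_castAdd, permDirectSum_natAdd,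
    Fin.val_castAdd, Fin.val_natAdd, add_lt_add_iff_left]
  exact and_iff_right fun i => by omega

theorem isCut_permDirectSum_of_le {τ : Equiv.Perm (Fin m)} {ρ : Equiv.Perm (Fin r)} {q : ℕ}
    (hq : q ≤ m) : IsCut (permDirectSum τ ρ) q ↔ IsCut τ q := by
  simp only [IsCut, Fin.forall_fin_add, permDirectSum_castAdd, permDirectSum_natAdd,
    Fin.val_castAdd, Fin.val_natAdd]
  exact and_iff_left fun i => by omega

theorem isStrongFixedPoint_permDirectSum_add {τ : Equiv.Perm (Fin m)} {ρ : Equiv.Perm (Fin r)}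
    {p : ℕ} : IsStrongFixedPoint (permDirectSum τ ρ) (m + p) ↔ IsStrongFixedPoint ρ p := by
  simp only [IsStrongFixedPoint, add_assoc, isCut_permDirectSum_add, add_lt_add_iff_left]

theorem isStrongFixedPoint_permDirectSum_length {τ : Equiv.Perm (Fin m)}
    {ρ : Equiv.Perm (Fin r)} :
    IsStrongFixedPoint (permDirectSum τ ρ) m ↔ IsStrongFixedPoint ρ 0 :=
  isStrongFixedPoint_permDirectSum_add (p := 0)

theorem isStrongFixedPoint_permDirectSum_of_lt {τ : Equiv.Perm (Fin m)}
    {ρ : Equiv.Perm (Fin r)} {p : ℕ} (hp : p < m) :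
    IsStrongFixedPoint (permDirectSum τ ρ) p ↔ IsStrongFixedPoint τ p := by
  simp only [IsStrongFixedPoint, isCut_permDirectSum_of_le hp.le, isCut_permDirectSum_of_le hp,
    hp, hp.trans_le (Nat.le_add_right m r)]

end DirectSum

section King

variable {n m r : ℕ}

theorem isKing_iff {σ : Equiv.Perm (Fin n)} :
    IsKing σ ↔ ∀ i j : Fin n, (j : ℕ) = i + 1 →
      (σ i : ℕ) + 1 < σ j ∨ (σ j : ℕ) + 1 < σ i := by
  constructor
  · rintro h i ⟨_, hj⟩ rfl
    have := lt_abs.1 (h i hj)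
    omega
  · intro h i hi
    have := h i ⟨i + 1, hi⟩ rfl
    exact lt_abs.2 (by omega)

theorem isKing_of_length_one (σ : Equiv.Perm (Fin 1)) : IsKing σ :=
  isKing_iff.2 fun i j _ => by omega

theorem forall_apply_add_one_lt_iff_not_isStrongFixedPoint {τ : Equiv.Perm (Fin m)}
    {ρ : Equiv.Perm (Fin r)} :
    (∀ (i : Fin m) (j : Fin r), m + (j : ℕ) = i + 1 → (τ i : ℕ) + 1 < m + ρ j) ↔
      ¬ (IsStrongFixedPoint τ (m - 1) ∧ IsStrongFixedPoint ρ 0) := by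
  have hlast : ∀ (i : Fin m) (j : Fin r), m + (j : ℕ) = i + 1 →
      ((τ i : ℕ) + 1 < m + ρ j ↔
        ¬ (IsStrongFixedPoint τ (m - 1) ∧ IsStrongFixedPoint ρ 0)) := by
    intro i j hij
    have hi : m - 1 = i := by omega
    have hj : 0 = (j : ℕ) := by omega
    rw [hi, hj, isStrongFixedPoint_iff_apply_eq_of_val_add_one_eq (by omega),
      isStrongFixedPoint_iff_apply_eq_of_val_eq_zero hj.symm, Fin.ext_iff, Fin.ext_iff]
    omega
  refine ⟨fun h hfixed => ?_, fun h i j hij => (hlast i j hij).2 h⟩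
  have hm := hfixed.1.1
  have hr := hfixed.2.1
  have hij : m + 0 = m - 1 + 1 := by omega
  exact (hlast ⟨m - 1, hm⟩ ⟨0, hr⟩ hij).1 (h _ _ hij) hfixed

theorem isKing_permDirectSum {τ : Equiv.Perm (Fin m)} {ρ : Equiv.Perm (Fin r)} :
    IsKing (permDirectSum τ ρ) ↔
      IsKing τ ∧ IsKing ρ ∧ ¬ (IsStrongFixedPoint τ (m - 1) ∧ IsStrongFixedPoint ρ 0) := by
  rw [← forall_apply_add_one_lt_iff_not_isStrongFixedPoint]
  simp only [isKing_iff, Fin.forall_fin_add, permDirectSum_castAdd, permDirectSum_natAdd,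
    Fin.val_castAdd, Fin.val_natAdd]
  constructor
  · rintro ⟨hτ, hρ⟩
    refine ⟨fun i => (hτ i).1, fun i j hij => ?_, fun i j hij => ?_⟩
    · have := (hρ i).2 j (by omega)
      omega
    · have := (hτ i).2 j hij
      omega
  · rintro ⟨hτ, hρ, hjunction⟩
    refine ⟨fun i => ⟨hτ i, fun j hij => Or.inl (hjunction i j hij)⟩,
      fun i => ⟨fun j hij => by omega, fun j hij => ?_⟩⟩
    have := hρ i j (by omega)
    omega

end King

section Occurrences

variable {n m r : ℕ}

open Classical in
/-- The strong fixed points of `σ` to the right of position `m`. -/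
noncomputable def strongFixedPointsAfter (σ : Equiv.Perm (Fin n)) (m : ℕ) : Finset ℕ :=
  {p ∈ range n | m < p ∧ IsStrongFixedPoint σ p}

theorem mem_strongFixedPointsAfter {σ : Equiv.Perm (Fin n)} {p : ℕ} :
    p ∈ strongFixedPointsAfter σ m ↔ m < p ∧ IsStrongFixedPoint σ p := by
  simp only [strongFixedPointsAfter, mem_filter, mem_range]
  exact and_iff_right_of_imp fun h => h.2.1

theorem filter_strongFixedPointsAfter {σ : Equiv.Perm (Fin n)} {p : ℕ} (h : m ≤ p) :
    {q ∈ strongFixedPointsAfter σ m | p < q} = strongFixedPointsAfter σ p := by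
  ext q
  simp only [mem_filter, mem_strongFixedPointsAfter]
  exact ⟨fun hq => ⟨hq.2, hq.1.2⟩, fun hq => ⟨⟨h.trans_lt hq.1, hq.2⟩, hq.1⟩⟩

theorem card_strongFixedPointsAfter_permDirectSum {τ : Equiv.Perm (Fin m)}
    {ρ : Equiv.Perm (Fin r)} :
    #(strongFixedPointsAfter (permDirectSum τ ρ) m) = #(strongFixedPointsAfter ρ 0) := by
  have hmap : strongFixedPointsAfter (permDirectSum τ ρ) m =
      (strongFixedPointsAfter ρ 0).map (addLeftEmbedding m) := by
    ext p
    simp only [mem_map, mem_strongFixedPointsAfter, addLeftEmbedding_apply]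
    constructor
    · rintro ⟨hp, hfixed⟩
      obtain ⟨q, rfl⟩ := Nat.exists_eq_add_of_le hp.le
      exact ⟨q, ⟨by omega, isStrongFixedPoint_permDirectSum_add.1 hfixed⟩, rfl⟩
    · rintro ⟨q, ⟨hq, hfixed⟩, rfl⟩
      exact ⟨by omega, isStrongFixedPoint_permDirectSum_add.2 hfixed⟩
  rw [hmap, card_map]

theorem occP_iff {σ : Equiv.Perm (Fin n)} {i j : Fin n} :
    OccP σ i j ↔
      (i : ℕ) = 0 ∧ i < j ∧ IsStrongFixedPoint σ i ∧ IsStrongFixedPoint σ j := by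
  constructor
  · rintro ⟨hij, hσij, hfirst, hσi, hbetween, hafter⟩
    have hi : (i : ℕ) = 0 := by
      by_contra h
      exact hfirst ⟨0, i.pos⟩ (Nat.pos_of_ne_zero h)
    refine ⟨hi, hij, ?_, isStrongFixedPoint_iff_forall_lt.2 ⟨fun k hk => ?_, hafter⟩⟩
    · exact (isStrongFixedPoint_iff_apply_eq_of_val_eq_zero hi).2 (Fin.ext (hσi.trans hi.symm))
    · rcases (not_lt.1 (hfirst k)).eq_or_lt with rfl | hik
      · exact hσij
      · exact hbetween k hik hk
  · rintro ⟨hi, hij, hσi, hσj⟩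
    obtain ⟨hbefore, hafter⟩ := isStrongFixedPoint_iff_forall_lt.1 hσj
    refine ⟨hij, hbefore i hij, fun k hk => ?_, ?_, fun k _ => hbefore k, hafter⟩
    · rw [Fin.lt_def] at hk
      omega
    · rw [hσi.apply_eq, hi]

theorem occP_eq_zero {σ : Equiv.Perm (Fin n)} (h : ¬ IsStrongFixedPoint σ 0) : occP σ = 0 := by
  have : IsEmpty {p : Fin n × Fin n // OccP σ p.1 p.2} := by
    refine ⟨fun ⟨p, hp⟩ => ?_⟩
    obtain ⟨hi, -, hσi, -⟩ := occP_iff.1 hp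
    exact h (hi ▸ hσi)
  exact Nat.card_of_isEmpty

theorem occP_eq_card {σ : Equiv.Perm (Fin n)} (h : IsStrongFixedPoint σ 0) :
    occP σ = #(strongFixedPointsAfter σ 0) := by
  have hmem : ∀ p : {p : Fin n × Fin n // OccP σ p.1 p.2},
      (p.1.2 : ℕ) ∈ strongFixedPointsAfter σ 0 := fun p => by
    obtain ⟨-, hij, -, hσj⟩ := occP_iff.1 p.2
    exact mem_strongFixedPointsAfter.2 ⟨(Nat.zero_le _).trans_lt hij, hσj⟩
  rw [occP, ← Fintype.card_coe, ← Nat.card_eq_fintype_card]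
  refine Nat.card_eq_of_bijective (fun p => ⟨p.1.2, hmem p⟩) ⟨fun p q hpq => ?_, fun q => ?_⟩
  · have hp := (occP_iff.1 p.2).1
    have hq := (occP_iff.1 q.2).1
    exact Subtype.ext (Prod.ext (Fin.ext (hp.trans hq.symm)) (Fin.ext (congrArg Subtype.val hpq)))
  · obtain ⟨hpos, hq⟩ := mem_strongFixedPointsAfter.1 q.2
    exact ⟨⟨(⟨0, h.1⟩, ⟨q, hq.1⟩), occP_iff.2 ⟨rfl, hpos, h, hq⟩⟩, rfl⟩

end Occurrences

section Enumeration

variable {n : ℕ}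

open Classical in
/-- The king permutations of length `n`. -/
noncomputable def kings (n : ℕ) : Finset (Equiv.Perm (Fin n)) := {σ | IsKing σ}

open Classical in
/-- The king permutations of length `n` that start with their smallest entry. -/
noncomputable def kingsFixingFirst (n : ℕ) : Finset (Equiv.Perm (Fin n)) :=
  {σ ∈ kings n | IsStrongFixedPoint σ 0}

open Classical in
/-- The king permutations of length `n` that start with their smallest entry but do not end with
their largest one. These are the left summands at a strong fixed point of a king permutation that
starts with its smallest entry. The truncated `n - 1` is harmless, since `kingsFixingFirst 0` is
empty. -/
noncomputable def kingsFixingFirstNotLast (n : ℕ) : Finset (Equiv.Perm (Fin n)) :=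
  {σ ∈ kingsFixingFirst n | ¬ IsStrongFixedPoint σ (n - 1)}

theorem mem_kings {σ : Equiv.Perm (Fin n)} : σ ∈ kings n ↔ IsKing σ := by
  simp [kings]

theorem mem_kingsFixingFirst {σ : Equiv.Perm (Fin n)} :
    σ ∈ kingsFixingFirst n ↔ IsKing σ ∧ IsStrongFixedPoint σ 0 := by
  simp [kingsFixingFirst, mem_kings]

theorem mem_kingsFixingFirstNotLast {σ : Equiv.Perm (Fin n)} :
    σ ∈ kingsFixingFirstNotLast n ↔
      (IsKing σ ∧ IsStrongFixedPoint σ 0) ∧ ¬ IsStrongFixedPoint σ (n - 1) := by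
  simp [kingsFixingFirstNotLast, mem_kingsFixingFirst]

theorem kingsFixingFirst_subset : kingsFixingFirst n ⊆ kings n := fun _ h =>
  mem_kings.2 (mem_kingsFixingFirst.1 h).1

theorem kingsFixingFirstNotLast_subset : kingsFixingFirstNotLast n ⊆ kingsFixingFirst n :=
  fun _ h => mem_kingsFixingFirst.2 (mem_kingsFixingFirstNotLast.1 h).1

theorem kingsFixingFirst_zero : kingsFixingFirst 0 = ∅ :=
  eq_empty_of_forall_notMem fun _ h => (mem_kingsFixingFirst.1 h).2.1.false

theorem kingsFixingFirstNotLast_zero : kingsFixingFirstNotLast 0 = ∅ :=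
  subset_empty.1 (kingsFixingFirst_zero ▸ kingsFixingFirstNotLast_subset)

theorem kingCount_eq_card_kings (n : ℕ) : kingCount n = #(kings n) := by
  rw [kingCount, Nat.subtype_card (kings n) fun _ => mem_kings]

theorem card_kingsFixingFirst_succ_add_card (n : ℕ) :
    #(kingsFixingFirst (n + 1)) + #(kingsFixingFirst n) = #(kings n) := by
  have hcard : #(kingsFixingFirst (1 + n)) =
      #(univ : Finset (Equiv.Perm (Fin 1))) * #(kings n \ kingsFixingFirst n) := by
    refine card_eq_card_mul_card_of_permDirectSum
      (fun σ hσ => (mem_kingsFixingFirst.1 hσ).2.2.2) fun τ ρ => ?_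
    simp only [mem_kingsFixingFirst, mem_sdiff, mem_kings, mem_univ, isKing_permDirectSum,
      isStrongFixedPoint_permDirectSum_of_lt one_pos, isKing_of_length_one,
      Nat.sub_self, isStrongFixedPoint_zero_of_length_one]
    tauto
  rw [card_univ, Fintype.card_unique, one_mul, add_comm 1 n] at hcard
  rw [hcard, card_sdiff_add_card_eq_card kingsFixingFirst_subset]

theorem kingsFixingFirst_one : kingsFixingFirst 1 = univ :=
  eq_univ_of_forall fun σ => mem_kingsFixingFirst.2
    ⟨isKing_of_length_one σ, isStrongFixedPoint_zero_of_length_one σ⟩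

theorem kingsFixingFirstNotLast_one : kingsFixingFirstNotLast 1 = ∅ :=
  eq_empty_of_forall_notMem fun σ h =>
    (mem_kingsFixingFirstNotLast.1 h).2 (isStrongFixedPoint_zero_of_length_one σ)

theorem card_kingsFixingFirst_succ_sdiff (hn : 0 < n) :
    #(kingsFixingFirst (n + 1) \ kingsFixingFirstNotLast (n + 1)) =
      #(kingsFixingFirstNotLast n) := by
  have hcard : #(kingsFixingFirst (n + 1) \ kingsFixingFirstNotLast (n + 1)) =
      #(kingsFixingFirstNotLast n) * #(univ : Finset (Equiv.Perm (Fin 1))) := by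
    have hmem : ∀ σ, σ ∈ kingsFixingFirst (n + 1) \ kingsFixingFirstNotLast (n + 1) ↔
        (IsKing σ ∧ IsStrongFixedPoint σ 0) ∧ IsStrongFixedPoint σ n := fun σ => by
      rw [mem_sdiff, mem_kingsFixingFirstNotLast, mem_kingsFixingFirst, Nat.add_sub_cancel]
      tauto
    refine card_eq_card_mul_card_of_permDirectSum
      (fun σ hσ => ((hmem σ).1 hσ).2.2.1) fun τ ρ => ?_
    simp only [hmem, mem_kingsFixingFirstNotLast, mem_univ, isKing_permDirectSum,
      isStrongFixedPoint_permDirectSum_of_lt hn, isStrongFixedPoint_permDirectSum_length,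
      isKing_of_length_one, isStrongFixedPoint_zero_of_length_one]
    tauto
  rw [hcard, card_univ, Fintype.card_unique, mul_one]

theorem card_kingsFixingFirst_succ_eq (n : ℕ) :
    #(kingsFixingFirst (n + 1)) = #(kingsFixingFirstNotLast (n + 1)) +
      ((if n = 0 then 1 else 0) + #(kingsFixingFirstNotLast n)) := by
  rcases n.eq_zero_or_pos with rfl | hn
  · simp [kingsFixingFirst_one, kingsFixingFirstNotLast_one, kingsFixingFirstNotLast_zero]
  · rw [if_neg hn.ne', zero_add, ← card_kingsFixingFirst_succ_sdiff hn,
      add_comm #(kingsFixingFirstNotLast _),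
      card_sdiff_add_card_eq_card kingsFixingFirstNotLast_subset]

theorem sum_pow_card_strongFixedPointsAfter_filter {R : Type*} [Semiring R] (u : R) (m r : ℕ) :
    ∑ σ ∈ kingsFixingFirst (m + r) with m ∈ strongFixedPointsAfter σ 0,
        u ^ #(strongFixedPointsAfter σ m) =
      #(kingsFixingFirstNotLast m) *
        ∑ ρ ∈ kingsFixingFirst r, u ^ #(strongFixedPointsAfter ρ 0) := by
  rw [sum_eq_sum_permDirectSum (S₁ := kingsFixingFirstNotLast m) (S₂ := kingsFixingFirst r)]
  · simp only [card_strongFixedPointsAfter_permDirectSum, sum_const, nsmul_eq_mul]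
  · exact fun σ hσ => (mem_strongFixedPointsAfter.1 (mem_filter.1 hσ).2).2.2.1
  · intro τ ρ
    rw [mem_filter, mem_strongFixedPointsAfter, isStrongFixedPoint_permDirectSum_length]
    rcases m.eq_zero_or_pos with rfl | hm
    · simp [kingsFixingFirstNotLast_zero]
    · simp only [mem_kingsFixingFirst, mem_kingsFixingFirstNotLast, isKing_permDirectSum,
        isStrongFixedPoint_permDirectSum_of_lt hm]
      tauto

theorem sum_strongFixedPointsAfter_eq_sum_antidiagonal {M : Type*} [AddCommMonoid M]
    (σ : Equiv.Perm (Fin n)) (m : ℕ) (f : ℕ → M) :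
    ∑ p ∈ strongFixedPointsAfter σ m, f p =
      ∑ x ∈ antidiagonal n, if x.1 ∈ strongFixedPointsAfter σ m then f x.1 else 0 := by
  rw [Nat.sum_antidiagonal_eq_sum_range_succ_mk, sum_ite_mem, inter_eq_right.2]
  intro p hp
  have := (mem_strongFixedPointsAfter.1 hp).2.1
  exact mem_range.2 (by omega)

theorem sum_pow_card_strongFixedPointsAfter {R : Type*} [Ring R] (u : R) (n : ℕ) :
    ∑ σ ∈ kingsFixingFirst n, u ^ #(strongFixedPointsAfter σ 0) =
      #(kingsFixingFirst n) + (u - 1) * ∑ x ∈ antidiagonal n,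
        #(kingsFixingFirstNotLast x.1) *
          ∑ ρ ∈ kingsFixingFirst x.2, u ^ #(strongFixedPointsAfter ρ 0) := by
  have hexpand : ∀ σ ∈ kingsFixingFirst n, u ^ #(strongFixedPointsAfter σ 0) =
      1 + (u - 1) * ∑ x ∈ antidiagonal n,
        if x.1 ∈ strongFixedPointsAfter σ 0 then u ^ #(strongFixedPointsAfter σ x.1) else 0 := by
    intro σ _
    rw [pow_card_eq_one_add_mul_sum]
    simp only [filter_strongFixedPointsAfter (Nat.zero_le _)]
    rw [sum_strongFixedPointsAfter_eq_sum_antidiagonal]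
  rw [sum_congr rfl hexpand, sum_add_distrib, ← mul_sum, sum_comm, sum_const, nsmul_one]
  congr 2
  refine sum_congr rfl fun x hx => ?_
  obtain rfl := mem_antidiagonal.1 hx
  rw [← sum_filter, sum_pow_card_strongFixedPointsAfter_filter]

theorem sum_pow_occP {R : Type*} [Ring R] (u : R) (n : ℕ) :
    ∑ σ ∈ kings n, u ^ occP σ = #(kings n) - #(kingsFixingFirst n) +
      ∑ σ ∈ kingsFixingFirst n, u ^ #(strongFixedPointsAfter σ 0) := by
  have hother : ∑ σ ∈ kings n \ kingsFixingFirst n, u ^ occP σ =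
      #(kings n) - #(kingsFixingFirst n) := by
    have hone : ∀ σ ∈ kings n \ kingsFixingFirst n, u ^ occP σ = 1 := fun σ hσ => by
      rw [mem_sdiff, mem_kings, mem_kingsFixingFirst] at hσ
      rw [occP_eq_zero fun h => hσ.2 ⟨hσ.1, h⟩, pow_zero]
    rw [sum_congr rfl hone, sum_const, nsmul_one, cast_card_sdiff kingsFixingFirst_subset]
  rw [← sum_sdiff kingsFixingFirst_subset, hother]
  congr 1
  exact sum_congr rfl fun σ hσ => by rw [occP_eq_card (mem_kingsFixingFirst.1 hσ).2]

end Enumeration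

section GeneratingFunctions

variable (R : Type*) [CommRing R]

/-- The generating function `A` of king permutations, over any commutative ring. -/
noncomputable def kingSeries : R⟦X⟧ := mk fun n => (kingCount n : R)

/-- The generating function of king permutations starting with their smallest entry. -/
noncomputable def kingFixingFirstSeries : R⟦X⟧ := mk fun n => (#(kingsFixingFirst n) : R)

/-- The generating function of king permutations starting with their smallest entry but not
ending with their largest one. -/
noncomputable def kingFixingFirstNotLastSeries : R⟦X⟧ :=
  mk fun n => (#(kingsFixingFirstNotLast n) : R)

variable {R}

/-- The generating function of king permutations starting with their smallest entry, each
weighted by `u` to the number of its further strong fixed points. -/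
noncomputable def strongFixedPointSeries (u : R) : R⟦X⟧ :=
  mk fun n => ∑ σ ∈ kingsFixingFirst n, u ^ #(strongFixedPointsAfter σ 0)

/-- The generating function `E` of king permutations by occurrences of the mesh pattern, with `u`
an element of any commutative ring. -/
noncomputable def occSeries (u : R) : R⟦X⟧ := mk fun n => ∑ σ ∈ kings n, u ^ occP σ

variable (R) in
theorem kingFixingFirstSeries_eq_X_mul :
    kingFixingFirstSeries R = X * (kingSeries R - kingFixingFirstSeries R) := by
  ext (_ | n)
  · simp [kingFixingFirstSeries, kingsFixingFirst_zero]
  · simp [kingFixingFirstSeries, kingSeries, coeff_succ_X_mul, kingCount_eq_card_kings,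
      ← card_kingsFixingFirst_succ_add_card n]

variable (R) in
theorem kingFixingFirstSeries_eq_notLast_add :
    kingFixingFirstSeries R =
      kingFixingFirstNotLastSeries R + X * (1 + kingFixingFirstNotLastSeries R) := by
  ext (_ | n)
  · simp [kingFixingFirstSeries, kingFixingFirstNotLastSeries, kingsFixingFirst_zero,
      kingsFixingFirstNotLast_zero]
  · simp [kingFixingFirstSeries, kingFixingFirstNotLastSeries, coeff_succ_X_mul, coeff_one,
      card_kingsFixingFirst_succ_eq]

theorem strongFixedPointSeries_eq (u : R) :
    strongFixedPointSeries u = kingFixingFirstSeries R +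
      C (u - 1) * (kingFixingFirstNotLastSeries R * strongFixedPointSeries u) := by
  ext n
  rw [map_add, coeff_C_mul, coeff_mul]
  simp only [kingFixingFirstSeries,
    kingFixingFirstNotLastSeries, strongFixedPointSeries, coeff_mk]
  exact sum_pow_card_strongFixedPointsAfter u n

theorem occSeries_eq (u : R) :
    occSeries u = kingSeries R - kingFixingFirstSeries R + strongFixedPointSeries u := by
  ext n
  simp only [map_add, map_sub, kingSeries, kingFixingFirstSeries, strongFixedPointSeries,
    occSeries, coeff_mk, kingCount_eq_card_kings]
  exact sum_pow_occP u n

theorem Etu_eq_occSeries : Etu = occSeries Polynomial.X := by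
  simp only [Etu, occSeries, kings, sum_filter]

end GeneratingFunctions

theorem statement_13_general {R : Type*} [CommRing R] (u : R) :
    (1 + X) * (1 + X * (1 + C u + C u * X) + X * (1 - C u) * kingSeries R) * occSeries u
      = ((1 + X * (1 + C u + C u * X) + X * (1 - C u) * kingSeries R) + X * (1 + X) ^ 2)
          * kingSeries R := by
  have hB := kingFixingFirstSeries_eq_X_mul R
  have hQ := kingFixingFirstSeries_eq_notLast_add R
  have hF := strongFixedPointSeries_eq u
  rw [occSeries_eq]
  set A := kingSeries R
  set B := kingFixingFirstSeries R
  set Q := kingFixingFirstNotLastSeries R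
  set F := strongFixedPointSeries u
  rw [map_sub, map_one] at hF
  have hD : 1 + X * (1 + C u + C u * X) + X * (1 - C u) * A =
      (1 + X) ^ 2 * (1 + (1 - C u) * Q) := by
    linear_combination (1 - C u) * (1 + X) * hQ - (1 - C u) * hB
  have hDF : (1 + X * (1 + C u + C u * X) + X * (1 - C u) * A) * F = (1 + X) ^ 2 * B := by
    rw [hD]
    linear_combination (1 + X) ^ 2 * hF
  linear_combination (1 + X) * hDF +
    (-(1 + X * (1 + C u + C u * X) + X * (1 - C u) * A) + (1 + X) ^ 2) * hB

theorem statement_13 :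
    (1 + T) * (1 + T * (1 + U + U * T) + T * (1 - U) * kingAu) * Etu
      = ((1 + T * (1 + U + U * T) + T * (1 - U) * kingAu) + T * (1 + T) ^ 2)
          * kingAu := by
  rw [Etu_eq_occSeries]
  exact statement_13_general Polynomial.X
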